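/- Assume f satisfies (f1) and (f2), let k ≥ 2, and let α* ∈ G_k. Then there exists δ₀ > 0 such that (α*−δ₀, α*+δ₀) ⊆ N_{k−1} \ F̃_k. -/

import Mathlib

open Set Filter MeasureTheory

namespace Paper

noncomputable section

/-- `F s = ∫₀ˢ f t dt`. -/
def Fint (f : ℝ → ℝ) (s : ℝ) : ℝ := ∫ t in (0:ℝ)..s, f t

/-- Hypothesis (f1): `f` is odd, `f 0 = 0`, there are `β > b > 0` with `f > 0` on `(b,∞)`,
`f ≤ 0`, `f ≢ 0` on `[0,b]`, and `F β = 0`. -/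
def Hf1 (f : ℝ → ℝ) (b β : ℝ) : Prop :=
  (∀ s, f (-s) = -f s) ∧ f 0 = 0 ∧ 0 < b ∧ b < β ∧
    (∀ s, b < s → 0 < f s) ∧ (∀ s ∈ Icc (0:ℝ) b, f s ≤ 0) ∧
    (∃ s ∈ Icc (0:ℝ) b, f s ≠ 0) ∧ Fint f β = 0

/-- Hypothesis (f2): `f` continuous on `[0,∞)`, C¹ on `(0,∞)`, `f' ∈ L¹(0,1)`. -/
def Hf2 (f : ℝ → ℝ) : Prop :=
  ContinuousOn f (Ici 0) ∧ (∀ s : ℝ, 0 < s → DifferentiableAt ℝ f s) ∧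
    ContinuousOn (deriv f) (Ioi 0) ∧ IntegrableOn (deriv f) (Ioo 0 1)

/-- Hypothesis (f3): `f s ≥ f' s * (s - β)` for `s ≥ β`. -/
def Hf3 (f : ℝ → ℝ) (β : ℝ) : Prop := ∀ s, β ≤ s → deriv f s * (s - β) ≤ f s

/-- Hypothesis (f4): `(F/f)' s ≥ (n-2)/(2n)` for `s > β`. -/
def Hf4 (n : ℕ) (f : ℝ → ℝ) (β : ℝ) : Prop :=
  ∀ s, β < s → ((n : ℝ) - 2) / (2 * (n : ℝ)) ≤ deriv (fun t => Fint f t / f t) s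

/-- Hypothesis (f4'): `(F/f)' s ≥ (n-2)/2` for `s > β`. -/
def Hf4' (n : ℕ) (f : ℝ → ℝ) (β : ℝ) : Prop :=
  ∀ s, β < s → ((n : ℝ) - 2) / 2 ≤ deriv (fun t => Fint f t / f t) s

/-- Hypothesis (f5): `s ↦ s f' s / f s` is nonincreasing on `[β,∞)`. -/
def Hf5 (f : ℝ → ℝ) (β : ℝ) : Prop := AntitoneOn (fun s => s * deriv f s / f s) (Ici β)

/-- Hypothesis (f6): `β f' β / f β ≤ n/(n-2)`. -/
def Hf6 (n : ℕ) (f : ℝ → ℝ) (β : ℝ) : Prop := β * deriv f β / f β ≤ (n : ℝ) / ((n : ℝ) - 2)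

/-- Hypothesis (f1'): `f 0 = 0` and `s f s > 0` for `s > 0`. -/
def Hf1' (f : ℝ → ℝ) : Prop := f 0 = 0 ∧ ∀ s : ℝ, 0 < s → 0 < s * f s

/-- Hypothesis (f3'): `f s ≥ s f' s` for `s > 0`, with strict inequality at points
arbitrarily close to `0`. -/
def Hf3' (f : ℝ → ℝ) : Prop :=
  (∀ s : ℝ, 0 < s → s * deriv f s ≤ f s) ∧
    ∀ ε : ℝ, 0 < ε → ∃ s ∈ Ioo (0:ℝ) ε, s * deriv f s < f s

/-- `v` is a C² solution of (E) on `(0,∞)`, continuous on `[0,∞)`,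
with `v 0 = α` and `v' 0 = 0`. -/
def IVPsol (n : ℕ) (f : ℝ → ℝ) (α : ℝ) (v : ℝ → ℝ) : Prop :=
  v 0 = α ∧ deriv v 0 = 0 ∧ ContinuousOn v (Ici 0) ∧
    (∀ r : ℝ, 0 < r → DifferentiableAt ℝ v r ∧ DifferentiableAt ℝ (deriv v) r) ∧
    (∀ r : ℝ, 0 < r → deriv (deriv v) r + ((n : ℝ) - 1) / r * deriv v r + f (v r) = 0)

/-- The family `α ↦ u α` of solutions of the IVP, with `u α r` and `u' α r`
continuous in `(α, r)`. -/
def Family (n : ℕ) (f : ℝ → ℝ) (u : ℝ → ℝ → ℝ) : Prop :=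
  (∀ α : ℝ, 0 < α → IVPsol n f α (u α)) ∧
    ContinuousOn (fun p : ℝ × ℝ => u p.1 p.2) (Ioi 0 ×ˢ Ici 0) ∧
    ContinuousOn (fun p : ℝ × ℝ => deriv (u p.1) p.2) (Ioi 0 ×ˢ Ici 0)

/-- The set whose supremum is `Z_k α`, given `T = T_{k-1} α`. -/
def ZsetAux (u : ℝ → ℝ → ℝ) (k : ℕ) (T α : ℝ) : Set ℝ :=
  {r | T < r ∧ ∀ s ∈ Ioo T r, (-1 : ℝ) ^ k * u α s < 0 ∧ 0 < (-1 : ℝ) ^ k * deriv (u α) s}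

/-- The pair `(Z_k, T_k)`, with `T₀ = 0`;
`Z_k α = sup {r > T_{k-1} α | (-1)^k u < 0, (-1)^k u' > 0 on (T_{k-1} α, r)}` and
`T_k α = inf {r > Z_k α | u'(r, α) = 0}`. -/
def ZT (u : ℝ → ℝ → ℝ) : ℕ → (ℝ → ℝ) × (ℝ → ℝ)
  | 0 => (fun _ => 0, fun _ => 0)
  | k + 1 =>
    let Z : ℝ → ℝ := fun α => sSup (ZsetAux u (k + 1) ((ZT u k).2 α) α)
    (Z, fun α => sInf {r | Z α < r ∧ deriv (u α) r = 0})

/-- `Z_k α` (as a real number; the genuine value when the defining set is bounded above). -/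
def Zk (u : ℝ → ℝ → ℝ) (k : ℕ) (α : ℝ) : ℝ := (ZT u k).1 α

/-- `T_k α`, with `T₀ = 0`. -/
def Tk (u : ℝ → ℝ → ℝ) (k : ℕ) (α : ℝ) : ℝ := (ZT u k).2 α

/-- The defining set of `Z_k α`; `Z_k α = ∞` iff this set is unbounded above. -/
def ZsetK (u : ℝ → ℝ → ℝ) (k : ℕ) (α : ℝ) : Set ℝ := ZsetAux u k (Tk u (k - 1) α) α

open Classical in
/-- The value of `u (·, α)` at `Z_k α`, as a limit `r → ∞` when `Z_k α = ∞`. -/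
def uAtZ (u : ℝ → ℝ → ℝ) (k : ℕ) (α : ℝ) : ℝ :=
  if BddAbove (ZsetK u k α) then u α (Zk u k α) else limUnder atTop (u α)

open Classical in
/-- The value of `u' (·, α)` at `Z_k α`, as a limit `r → ∞` when `Z_k α = ∞`. -/
def duAtZ (u : ℝ → ℝ → ℝ) (k : ℕ) (α : ℝ) : ℝ :=
  if BddAbove (ZsetK u k α) then deriv (u α) (Zk u k α) else limUnder atTop (deriv (u α))

open Classical in
/-- `Z_k α` as an extended real number. -/
def ZkE (u : ℝ → ℝ → ℝ) (k : ℕ) (α : ℝ) : WithTop ℝ :=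
  if BddAbove (ZsetK u k α) then (Zk u k α : WithTop ℝ) else ⊤

/-- Membership in `F̃_k` (for `α ∈ N_{k-1}`): `(-1)^k u' (r, α) < 0` for all `r > Z_{k-1} α`. -/
def Ftil (u : ℝ → ℝ → ℝ) (k : ℕ) (α : ℝ) : Prop :=
  ∀ r, Zk u (k - 1) α < r → (-1 : ℝ) ^ k * deriv (u α) r < 0

/-- The sets `N_k` (with `N₀ := (0,∞)`). -/
def Nk (u : ℝ → ℝ → ℝ) : ℕ → Set ℝ
  | 0 => Ioi 0
  | 1 => {α | 0 < α ∧ uAtZ u 1 α = 0 ∧ duAtZ u 1 α < 0}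
  | k + 2 => {α | α ∈ Nk u (k + 1) ∧ ¬Ftil u (k + 2) α ∧ uAtZ u (k + 2) α = 0 ∧
      0 < (-1 : ℝ) ^ (k + 2) * duAtZ u (k + 2) α}

/-- The sets `G_k`. -/
def Gk (u : ℝ → ℝ → ℝ) : ℕ → Set ℝ
  | 0 => ∅
  | 1 => {α | 0 < α ∧ uAtZ u 1 α = 0 ∧ duAtZ u 1 α = 0}
  | k + 2 => {α | α ∈ Nk u (k + 1) ∧ ¬Ftil u (k + 2) α ∧ uAtZ u (k + 2) α = 0 ∧
      duAtZ u (k + 2) α = 0}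

/-- The set `F̃_k` (for `k ≥ 2`). -/
def FtilSet (u : ℝ → ℝ → ℝ) (k : ℕ) : Set ℝ := {α | α ∈ Nk u (k - 1) ∧ Ftil u k α}

/-- The set `F_k` (for `k ≥ 2`). -/
def Fk (u : ℝ → ℝ → ℝ) (k : ℕ) : Set ℝ :=
  {α | α ∈ Nk u (k - 1) ∧ ¬Ftil u k α ∧ (-1 : ℝ) ^ k * uAtZ u k α < 0}

/-- The sets `P_k`. -/
def Pk (u : ℝ → ℝ → ℝ) : ℕ → Set ℝ
  | 0 => ∅
  | 1 => {α | 0 < α ∧ 0 < uAtZ u 1 α}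
  | k + 2 => FtilSet u (k + 2) ∪ Fk u (k + 2)

/-- The set of extremal points (zeros of `u' (·, α)`) in `[0, A]`. -/
def ExtSet (u : ℝ → ℝ → ℝ) (α A : ℝ) : Set ℝ := {r | r ∈ Icc 0 A ∧ deriv (u α) r = 0}

/-- The conclusion of the δ₁-lemma (Lemma 4.1): every solution with initial value in
`(α*-δ₁, α*+δ₁)` has exactly `k` extremal points in `[0, T_{k-1}(α*) + a]`, with minimum
values `< -β` and maximum values `> β`; moreover any two such solutions intersect between
any two of their consecutive extremal points, and in `(T_{k-1}(α*), Z_k(α*))`. -/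
def DeltaOneLemma (f : ℝ → ℝ) (β : ℝ) (u : ℝ → ℝ → ℝ) (k : ℕ) (αs a δ₁ : ℝ) : Prop :=
  0 < a ∧ 0 < δ₁ ∧
    (∀ α ∈ Ioo (αs - δ₁) (αs + δ₁),
      (ExtSet u α (Tk u (k - 1) αs + a)).Finite ∧
        (ExtSet u α (Tk u (k - 1) αs + a)).ncard = k ∧
        ∀ r ∈ ExtSet u α (Tk u (k - 1) αs + a),
          (IsLocalMin (u α) r → u α r < -β) ∧ (IsLocalMax (u α) r → β < u α r)) ∧
    ∀ α₁ ∈ Ioo (αs - δ₁) (αs + δ₁), ∀ α₂ ∈ Ioo (αs - δ₁) (αs + δ₁), α₁ < α₂ →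
      (∀ i : ℕ, 1 ≤ i → i ≤ k - 1 →
        ∃ t, max (Tk u (i - 1) α₁) (Tk u (i - 1) α₂) < t ∧
          t < min (Tk u i α₁) (Tk u i α₂) ∧ u α₁ t = u α₂ t) ∧
      ∃ t, Tk u (k - 1) αs < t ∧ (BddAbove (ZsetK u k αs) → t < Zk u k αs) ∧
        u α₁ t = u α₂ t

/-- `ρ` is the inverse of the monotone branch of `v` on `[t₁, t₂]`, whose set of values
is `[m, M]`. -/
def InvBranch (v ρ : ℝ → ℝ) (t₁ t₂ m M : ℝ) : Prop :=
  (∀ s ∈ Icc m M, ρ s ∈ Icc t₁ t₂ ∧ v (ρ s) = s) ∧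
    ∀ s ∈ Ioo m M, HasDerivAt ρ (1 / deriv v (ρ s)) s

/-- `ρ` inverts a decreasing branch of `v` over the value interval `[m, M]`, along which
`(v')² + 2F > 0`. -/
def DecBranchInv (f : ℝ → ℝ) (v ρ : ℝ → ℝ) (m M : ℝ) : Prop :=
  ∀ s ∈ Icc m M, 0 ≤ ρ s ∧ v (ρ s) = s ∧ deriv v (ρ s) < 0 ∧
    HasDerivAt ρ (1 / deriv v (ρ s)) s ∧ 0 < (deriv v (ρ s)) ^ 2 + 2 * Fint f s

/-- The functional `Q(s) = -4 (F/f)(s) r/r' - r²/(r')² - 2 r² F(s) + H(s)` computed along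
the branch inverse `ρ`. -/
def Qfun (f H ρ : ℝ → ℝ) (s : ℝ) : ℝ :=
  -4 * (Fint f s / f s) * (ρ s / deriv ρ s) - (ρ s) ^ 2 / (deriv ρ s) ^ 2 -
    2 * (ρ s) ^ 2 * Fint f s + H s

/-- The functional `P(s) = -2n (F/f)(s) r^{n-1}/r' - r^n/(r')² - 2 r^n F(s)`. -/
def Pfun (n : ℕ) (f : ℝ → ℝ) (ρ : ℝ → ℝ) (s : ℝ) : ℝ :=
  -(2 * (n : ℝ)) * (Fint f s / f s) * (ρ s ^ (n - 1) / deriv ρ s) -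
    ρ s ^ n / (deriv ρ s) ^ 2 - 2 * ρ s ^ n * Fint f s

/-- The functional `W(s) = r(s) √((u'(r(s)))² + 2 F(s))`. -/
def Wfun (f v ρ : ℝ → ℝ) (s : ℝ) : ℝ :=
  ρ s * Real.sqrt ((deriv v (ρ s)) ^ 2 + 2 * Fint f s)

/-- The functional `W̃(s) = r(s)^{n-1} √((u'(r(s)))² + 2 F(s))`. -/
def Wtil (n : ℕ) (f : ℝ → ℝ) (v ρ : ℝ → ℝ) (s : ℝ) : ℝ :=
  ρ s ^ (n - 1) * Real.sqrt ((deriv v (ρ s)) ^ 2 + 2 * Fint f s)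

/-- `v` changes sign at `z ∈ (0,∞)`: `v z = 0` and `v` takes both signs in every
neighborhood of `z` (within `(0,∞)`). -/
def SignChange (v : ℝ → ℝ) (z : ℝ) : Prop :=
  v z = 0 ∧ ∀ ε : ℝ, 0 < ε →
    (∃ x ∈ Ioo (z - ε) (z + ε) ∩ Ioi 0, 0 < v x) ∧
    (∃ x ∈ Ioo (z - ε) (z + ε) ∩ Ioi 0, v x < 0)

/-- `v` has exactly `m` sign changes in `(0,∞)`. -/
def ExactSignChanges (v : ℝ → ℝ) (m : ℕ) : Prop :=
  {z | 0 < z ∧ SignChange v z}.Finite ∧ {z | 0 < z ∧ SignChange v z}.ncard = m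

/-- Bound state: a C² solution of (E) on `(0,∞)` with `v' 0 = 0` and `v r → 0` as `r → ∞`. -/
def BoundState (n : ℕ) (f : ℝ → ℝ) (v : ℝ → ℝ) : Prop :=
  ContinuousOn v (Ici 0) ∧
    (∀ r : ℝ, 0 < r → DifferentiableAt ℝ v r ∧ DifferentiableAt ℝ (deriv v) r) ∧
    (∀ r : ℝ, 0 < r → deriv (deriv v) r + ((n : ℝ) - 1) / r * deriv v r + f (v r) = 0) ∧
    deriv v 0 = 0 ∧ Tendsto v atTop (nhds 0)

/-- Solution of the Dirichlet problem on the ball of radius `R`. -/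
def DirichletSol (n : ℕ) (f : ℝ → ℝ) (R : ℝ) (v : ℝ → ℝ) : Prop :=
  ContinuousOn v (Icc 0 R) ∧
    (∀ r ∈ Ioo (0:ℝ) R, DifferentiableAt ℝ v r ∧ DifferentiableAt ℝ (deriv v) r) ∧
    (∀ r ∈ Ioo (0:ℝ) R, deriv (deriv v) r + ((n : ℝ) - 1) / r * deriv v r + f (v r) = 0) ∧
    deriv v 0 = 0 ∧ v R = 0

end
end Paper

open Paper Set Filter MeasureTheory

namespace Paper

/-! ### Single radial solutions -/

/-- `v` is a C¹ function on `[0,∞)` solving the radial equation on `(0,∞)`. -/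
structure RadialSol (n : ℕ) (f v : ℝ → ℝ) : Prop where
  cont : ContinuousOn v (Ici 0)
  deriv_cont : ContinuousOn (deriv v) (Ici 0)
  hasDerivAt : ∀ r : ℝ, 0 < r → HasDerivAt v (deriv v r) r
  ode : ∀ r : ℝ, 0 < r →
    HasDerivAt (deriv v) (-(((n : ℝ) - 1) / r * deriv v r + f (v r))) r

/-- The energy `v'² / 2 + F(v)`. -/
noncomputable def energy (f v : ℝ → ℝ) (r : ℝ) : ℝ := deriv v r ^ 2 / 2 + Fint f (v r)

section Single

variable {n : ℕ} {f v : ℝ → ℝ} {b T z : ℝ}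

lemma hasDerivAt_Fint (hf : Continuous f) (s : ℝ) : HasDerivAt (Fint f) (f s) s :=
  intervalIntegral.integral_hasDerivAt_right (hf.intervalIntegrable _ _)
    (hf.stronglyMeasurableAtFilter _ _) hf.continuousAt

lemma continuous_Fint (hf : Continuous f) : Continuous (Fint f) :=
  continuous_iff_continuousAt.2 fun s => (hasDerivAt_Fint hf s).continuousAt

lemma Fint_zero : Fint f 0 = 0 := intervalIntegral.integral_same

lemma Fint_nonpos (hneg : ∀ s ∈ Icc (0 : ℝ) b, f s ≤ 0) {s : ℝ} (hs : s ∈ Icc (0 : ℝ) b) :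
    Fint f s ≤ 0 := by
  unfold Fint
  rw [intervalIntegral.integral_of_le hs.1]
  exact setIntegral_nonpos measurableSet_Ioc fun t ht => hneg t ⟨ht.1.le, ht.2.trans hs.2⟩

namespace RadialSol

lemma energy_continuousOn (hf : Continuous f) (hv : RadialSol n f v) :
    ContinuousOn (energy f v) (Ici 0) :=
  ((hv.deriv_cont.pow 2).div_const 2).add ((continuous_Fint hf).comp_continuousOn hv.cont)

lemma energy_hasDerivAt (hf : Continuous f) (hv : RadialSol n f v) {r : ℝ} (hr : 0 < r) :
    HasDerivAt (energy f v) (-(((n : ℝ) - 1) / r * deriv v r ^ 2)) r := by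
  have h := (((hv.ode r hr).pow 2).div_const 2).add
    ((hasDerivAt_Fint hf (v r)).comp r (hv.hasDerivAt r hr))
  refine h.congr_deriv ?_
  push_cast
  ring

lemma energy_lt (hn : 2 ≤ n) (hf : Continuous f) (hv : RadialSol n f v) {r : ℝ} (hT : 0 ≤ T)
    (hr : T < r) (hd : ∀ s ∈ Ioo T r, deriv v s < 0) : energy f v r < energy f v T := by
  have hsub : Icc T r ⊆ Ici 0 := fun x hx => hT.trans hx.1
  refine strictAntiOn_of_deriv_neg (convex_Icc T r) ((hv.energy_continuousOn hf).mono hsub) ?_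
    (left_mem_Icc.2 hr.le) (right_mem_Icc.2 hr.le) hr
  intro x hx
  rw [interior_Icc] at hx
  have hx0 : 0 < x := hT.trans_lt hx.1
  rw [(hv.energy_hasDerivAt hf hx0).deriv]
  have hn' : (2 : ℝ) ≤ n := by exact_mod_cast hn
  have : 0 < deriv v x ^ 2 := sq_pos_of_neg (hd x hx)
  have : 0 < ((n : ℝ) - 1) / x := div_pos (by linarith) hx0
  simp only [Left.neg_neg_iff]
  positivity

lemma energy_antitoneOn (hn : 2 ≤ n) (hf : Continuous f) (hv : RadialSol n f v) :
    AntitoneOn (energy f v) (Ici 0) := by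
  refine antitoneOn_of_deriv_nonpos (convex_Ici 0) (hv.energy_continuousOn hf) ?_ ?_
  · intro x hx
    rw [interior_Ici] at hx
    exact (hv.energy_hasDerivAt hf hx).differentiableAt.differentiableWithinAt
  · intro x hx
    rw [interior_Ici] at hx
    have hx0 : 0 < x := hx
    rw [(hv.energy_hasDerivAt hf hx).deriv]
    have hn' : (2 : ℝ) ≤ n := by exact_mod_cast hn
    have : 0 ≤ ((n : ℝ) - 1) / x := div_nonneg (by linarith) hx0.le
    simp only [Left.neg_nonpos_iff]
    positivity

/-- A solution starting with zero slope decreases as long as it stays above `b`. -/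
lemma deriv_neg_of_gt (hn : 2 ≤ n) (hpos : ∀ s, b < s → 0 < f s) (hv : RadialSol n f v)
    {R r : ℝ} (hT : 0 ≤ T) (hd : deriv v T = 0) (hb : ∀ s ∈ Icc T R, b < v s)
    (hr : r ∈ Ioc T R) : deriv v r < 0 := by
  obtain ⟨m, rfl⟩ := Nat.exists_eq_add_of_le' hn
  have hanti : StrictAntiOn (fun r => r ^ (m + 1) * deriv v r) (Icc T R) := by
    refine strictAntiOn_of_deriv_neg (convex_Icc T R)
      (((continuous_pow _).continuousOn).mul
        (hv.deriv_cont.mono fun x hx => hT.trans hx.1)) ?_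
    intro x hx
    rw [interior_Icc] at hx
    have hx0 : 0 < x := hT.trans_lt hx.1
    rw [((hasDerivAt_pow (m + 1) x).fun_mul (hv.ode x hx0)).deriv]
    have hfx := hpos _ (hb x ⟨hx.1.le, hx.2.le⟩)
    have key : ((m + 1 : ℕ) : ℝ) * x ^ (m + 1 - 1) * deriv v x + x ^ (m + 1) *
        -((((m + 2 : ℕ) : ℝ) - 1) / x * deriv v x + f (v x)) = -(x ^ (m + 1) * f (v x)) := by
      push_cast
      field_simp
      ring
    rw [key]
    simp only [Left.neg_neg_iff]
    positivity
  have h := hanti (left_mem_Icc.2 (hr.1.le.trans hr.2)) ⟨hr.1.le, hr.2⟩ hr.1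
  simp only [hd, mul_zero] at h
  have hr0 : 0 < r := hT.trans_lt hr.1
  exact neg_of_mul_neg_right h (by positivity)

lemma gt_of_energy_pos (hneg : ∀ s ∈ Icc (0 : ℝ) b, f s ≤ 0) (hd : deriv v T = 0)
    (h0 : 0 ≤ v T) (hE : 0 < energy f v T) : b < v T := by
  by_contra! h
  have := Fint_nonpos hneg ⟨h0, h⟩
  simp only [energy, hd] at hE
  linarith

lemma nonneg_left (hv : RadialSol n f v) (hT : 0 ≤ T) (hz : T < z)
    (h : ∀ s ∈ Ioo T z, 0 < v s) : 0 ≤ v T := by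
  have hc : ContinuousOn v (Icc T z) := hv.cont.mono fun x hx => hT.trans hx.1
  have hmem : T ∈ closure (Ioo T z) := by
    rw [closure_Ioo hz.ne]; exact left_mem_Icc.2 hz.le
  have hc' : ContinuousWithinAt v (Ioo T z) T :=
    (hc T (left_mem_Icc.2 hz.le)).mono Ioo_subset_Icc_self
  have : (nhdsWithin T (Ioo T z)).NeBot := mem_closure_iff_nhdsWithin_neBot.1 hmem
  exact ge_of_tendsto hc' (eventually_nhdsWithin_of_forall fun s hs => (h s hs).le)

/-- A solution descending from a critical point to a zero starts above `b`. -/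
lemma gt_of_descent_to_zero (hn : 2 ≤ n) (hf : Continuous f)
    (hneg : ∀ s ∈ Icc (0 : ℝ) b, f s ≤ 0) (hv : RadialSol n f v) (hT : 0 ≤ T) (hTz : T < z)
    (hd : deriv v T = 0) (h : ∀ s ∈ Ioo T z, 0 < v s ∧ deriv v s < 0) (hz : v z = 0) :
    b < v T := by
  refine gt_of_energy_pos hneg hd (hv.nonneg_left hT hTz fun s hs => (h s hs).1) ?_
  refine lt_of_le_of_lt ?_ (hv.energy_lt hn hf hT hTz fun s hs => (h s hs).2)
  simp only [energy, hz, Fint_zero]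
  positivity

/-- A solution descending from a critical point to zero at infinity starts above `b`. -/
lemma gt_of_descent_to_infty (hn : 2 ≤ n) (hf : Continuous f)
    (hneg : ∀ s ∈ Icc (0 : ℝ) b, f s ≤ 0) (hv : RadialSol n f v) (hT : 0 ≤ T)
    (hd : deriv v T = 0) (h : ∀ s, T < s → 0 < v s ∧ deriv v s < 0)
    (hlim : Tendsto v atTop (nhds 0)) : b < v T := by
  refine gt_of_energy_pos hneg hd
    (hv.nonneg_left (z := T + 1) hT (by linarith) fun s hs => (h s hs.1).1) ?_
  refine lt_of_le_of_lt ?_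
    (hv.energy_lt hn hf hT (lt_add_one T) fun s hs => (h s hs.1).2)
  have hF : Tendsto (fun r => Fint f (v r)) atTop (nhds 0) := by
    have := ((continuous_Fint hf).tendsto 0).comp hlim
    rwa [Fint_zero] at this
  refine le_of_tendsto hF ?_
  filter_upwards [eventually_ge_atTop (T + 1)] with r hr
  have h1 := hv.energy_antitoneOn hn hf (show T + 1 ∈ Ici (0 : ℝ) by simp; linarith)
    (show r ∈ Ici (0 : ℝ) by simp; linarith) hr
  refine le_trans ?_ h1
  have := sq_nonneg (deriv v r)
  simp only [energy]
  linarith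

end RadialSol

lemma exists_tendsto_of_antitoneOn {g : ℝ → ℝ} {c : ℝ} (hg : AntitoneOn g (Ici T))
    (hc : ∀ s, T ≤ s → c ≤ g s) : ∃ l, Tendsto g atTop (nhds l) := by
  have hanti : Antitone fun r => g (max r T) := fun x y hxy =>
    hg (mem_Ici.2 (le_max_right _ _)) (mem_Ici.2 (le_max_right _ _)) (max_le_max_right T hxy)
  refine ⟨_, (tendsto_atTop_ciInf hanti ⟨c, ?_⟩).congr' ?_⟩
  · rintro _ ⟨x, rfl⟩
    exact hc _ (le_max_right _ _)
  · filter_upwards [eventually_ge_atTop T] with r hr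
    rw [max_eq_left hr]

namespace RadialSol

lemma exists_tendsto_of_descent (hv : RadialSol n f v) (hT : 0 ≤ T)
    (h : ∀ s, T < s → 0 < v s ∧ deriv v s < 0) : ∃ l, Tendsto v atTop (nhds l) := by
  refine exists_tendsto_of_antitoneOn (T := T + 1) (c := 0) ?_
    fun s hs => (h s (by linarith)).1.le
  refine (strictAntiOn_of_deriv_neg (convex_Ici _)
    (hv.cont.mono fun x hx => ?_) fun x hx => ?_).antitoneOn
  · have : T + 1 ≤ x := hx
    simp only [mem_Ici]
    linarith
  · rw [interior_Ici] at hx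
    exact (h x (lt_trans (by linarith) hx)).2

lemma deriv_tendsto_zero (hn : 2 ≤ n) (hf : Continuous f) (hv : RadialSol n f v)
    (h : ∀ s, T < s → 0 < v s ∧ deriv v s < 0) (hlim : Tendsto v atTop (nhds 0)) :
    Tendsto (deriv v) atTop (nhds 0) := by
  have hF : Tendsto (fun r => Fint f (v r)) atTop (nhds 0) := by
    have := ((continuous_Fint hf).tendsto 0).comp hlim
    rwa [Fint_zero] at this
  obtain ⟨R, hR⟩ : ∃ R, ∀ r, R ≤ r → -1 ≤ Fint f (v r) := by
    have := hF.eventually (eventually_ge_nhds (show (-1 : ℝ) < 0 by norm_num))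
    exact eventually_atTop.1 this
  obtain ⟨L, hL⟩ : ∃ L, Tendsto (energy f v) atTop (nhds L) := by
    refine exists_tendsto_of_antitoneOn (T := max R 0) (c := -1)
      ((hv.energy_antitoneOn hn hf).mono (Ici_subset_Ici.2 (le_max_right _ _))) fun s hs => ?_
    have := hR s ((le_max_left _ _).trans hs)
    have := sq_nonneg (deriv v s)
    simp only [energy]
    linarith
  have hd : Tendsto (deriv v) atTop (nhds (-√(2 * (L - 0)))) := by
    have h2 := ((hL.sub hF).const_mul 2).sqrt.neg
    refine h2.congr' ?_
    filter_upwards [eventually_gt_atTop T] with r hr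
    have : 2 * (energy f v r - Fint f (v r)) = (deriv v r) ^ 2 := by
      simp only [energy]; ring
    rw [this, Real.sqrt_sq_eq_abs, abs_of_neg (h r hr).2, neg_neg]
  have hmvt : ∀ r, ∃ c, r < c ∧ (0 < r → deriv v c = v (r + 1) - v r) := by
    intro r
    rcases le_or_gt r 0 with hr | hr
    · exact ⟨r + 1, by linarith, fun h => absurd h (not_lt.2 hr)⟩
    · obtain ⟨c, hc, hc'⟩ := exists_deriv_eq_slope v (lt_add_one r)
        (hv.cont.mono fun x hx => hr.le.trans hx.1) fun x hx =>
          (hv.hasDerivAt x (hr.trans hx.1)).differentiableAt.differentiableWithinAt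
      exact ⟨c, hc.1, fun _ => by rw [hc']; simp⟩
  choose c hc hc' using hmvt
  have hct : Tendsto c atTop atTop := tendsto_atTop_mono (fun r => (hc r).le) tendsto_id
  have h0 : Tendsto (fun r => v (r + 1) - v r) atTop (nhds (0 - 0)) :=
    (hlim.comp (tendsto_atTop_add_const_right _ 1 tendsto_id)).sub hlim
  have h1 : Tendsto (fun r => v (r + 1) - v r) atTop (nhds (-√(2 * (L - 0)))) := by
    refine (hd.comp hct).congr' ?_
    filter_upwards [eventually_gt_atTop 0] with r hr using hc' r hr
  rw [tendsto_nhds_unique h1 h0, sub_zero] at hd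
  exact hd

end RadialSol

/-! ### Descent sets, their end points, and the following critical points -/

/-- The set of end points of descending positive arcs of `v` issuing from `T`. -/
def descentSet (v : ℝ → ℝ) (T : ℝ) : Set ℝ :=
  {r | T < r ∧ ∀ s ∈ Ioo T r, 0 < v s ∧ deriv v s < 0}

/-- `v` descends from `T` to a transversal zero at `z`. -/
structure DescendsTo (v : ℝ → ℝ) (T z : ℝ) : Prop where
  lt : T < z
  arc : ∀ s ∈ Ioo T z, 0 < v s ∧ deriv v s < 0
  zero : v z = 0
  deriv_neg : deriv v z < 0

/-- `T` is the first critical point of `v` after `z`, and `v` decreases in between. -/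
structure NextCrit (v : ℝ → ℝ) (z T : ℝ) : Prop where
  lt : z < T
  neg : ∀ s ∈ Ioo z T, deriv v s < 0
  crit : deriv v T = 0

lemma descentSet_eq_Ioc (hTz : T < z) (h : ∀ s ∈ Ioo T z, 0 < v s ∧ deriv v s < 0)
    (hz : v z = 0) : descentSet v T = Ioc T z := by
  ext r
  constructor
  · rintro ⟨hr, hs⟩
    refine ⟨hr, ?_⟩
    by_contra! hzr
    exact (hs z ⟨hTz, hzr⟩).1.ne' hz
  · rintro ⟨hr, hrz⟩
    exact ⟨hr, fun s hs => h s ⟨hs.1, hs.2.trans_le hrz⟩⟩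

lemma DescendsTo.bddAbove (h : DescendsTo v T z) : BddAbove (descentSet v T) := by
  rw [descentSet_eq_Ioc h.lt h.arc h.zero]
  exact bddAbove_Ioc

lemma DescendsTo.sSup_eq (h : DescendsTo v T z) : sSup (descentSet v T) = z := by
  rw [descentSet_eq_Ioc h.lt h.arc h.zero, csSup_Ioc h.lt]

lemma arc_of_bddAbove (hne : (descentSet v T).Nonempty) (hb : BddAbove (descentSet v T)) :
    T < sSup (descentSet v T) ∧
      ∀ s ∈ Ioo T (sSup (descentSet v T)), 0 < v s ∧ deriv v s < 0 := by
  obtain ⟨r, hr⟩ := hne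
  refine ⟨hr.1.trans_le (le_csSup hb hr), fun s hs => ?_⟩
  obtain ⟨r', hr', hsr⟩ := exists_lt_of_lt_csSup ⟨r, hr⟩ hs.2
  exact hr'.2 s ⟨hs.1, hsr⟩

lemma arc_of_not_bddAbove (hb : ¬BddAbove (descentSet v T)) :
    ∀ s, T < s → 0 < v s ∧ deriv v s < 0 := by
  intro s hs
  obtain ⟨r, hr, hsr⟩ := not_bddAbove_iff.1 hb s
  exact hr.2 s ⟨hs, hsr⟩

lemma NextCrit.sInf_eq (h : NextCrit v z T) : sInf {r | z < r ∧ deriv v r = 0} = T := by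
  refine IsLeast.csInf_eq ⟨⟨h.lt, h.crit⟩, fun r hr => ?_⟩
  by_contra! hlt
  exact (h.neg r ⟨hr.1, hlt⟩).ne hr.2

/-- If `v'` is negative at `z` and nonnegative somewhere later, it has a first zero. -/
lemma exists_nextCrit {R : ℝ} (hc : ContinuousOn (deriv v) (Icc z R)) (hzR : z ≤ R)
    (hz : deriv v z < 0) (hR : 0 ≤ deriv v R) : ∃ T, T ≤ R ∧ NextCrit v z T := by
  obtain ⟨x, hx, hx0⟩ := intermediate_value_Icc hzR hc ⟨hz.le, hR⟩
  set S := Icc z R ∩ deriv v ⁻¹' {0}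
  have hScl : IsCompact S :=
    isCompact_Icc.of_isClosed_subset (hc.preimage_isClosed_of_isClosed isClosed_Icc
      isClosed_singleton) inter_subset_left
  obtain ⟨T, ⟨hTI, hT0⟩, hTmin⟩ := hScl.exists_isLeast ⟨x, hx, hx0⟩
  have hT0 : deriv v T = 0 := hT0
  have hzT : z < T := lt_of_le_of_ne hTI.1 fun h => by rw [h, hT0] at hz; exact lt_irrefl _ hz
  refine ⟨T, hTI.2, hzT, fun s hs => ?_, hT0⟩
  by_contra! hs0
  obtain ⟨y, hy, hy0⟩ := intermediate_value_Icc hs.1.le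
    (hc.mono (Icc_subset_Icc_right (hs.2.le.trans hTI.2))) ⟨hz.le, hs0⟩
  have : T ≤ y := hTmin ⟨⟨hy.1, hy.2.trans (hs.2.le.trans hTI.2)⟩, hy0⟩
  linarith [hy.2, hs.2]

end Single

/-! ### Families of solutions -/

/-- A family of radial solutions, C¹ in `r` jointly with the parameter. -/
structure RadialFamily (n : ℕ) (f : ℝ → ℝ) (w : ℝ → ℝ → ℝ) : Prop where
  sol : ∀ α : ℝ, 0 < α → RadialSol n f (w α)
  cont : ContinuousOn (fun p : ℝ × ℝ => w p.1 p.2) (Ioi 0 ×ˢ Ici 0)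
  deriv_cont : ContinuousOn (fun p : ℝ × ℝ => deriv (w p.1) p.2) (Ioi 0 ×ˢ Ici 0)

lemma eventually_forall_lt {g : ℝ × ℝ → ℝ} (hg : ContinuousOn g (Ioi 0 ×ˢ Ici 0)) {a c : ℝ}
    (ha : 0 < a) {K : Set ℝ} (hK : IsCompact K) (hK0 : K ⊆ Ici 0)
    (h : ∀ s ∈ K, g (a, s) < c) : ∀ᶠ α in nhds a, ∀ s ∈ K, g (α, s) < c := by
  have hg' : ContinuousOn (fun p : ℝ × ℝ => g (p.1, max p.2 0)) (Ioi 0 ×ˢ univ) := by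
    refine hg.comp (by fun_prop) ?_
    rintro ⟨x, y⟩ ⟨hx, -⟩
    exact ⟨hx, mem_Ici.2 (le_max_right _ _)⟩
  have key : ∀ᶠ α in nhds a, ∀ s ∈ K, g (α, max s 0) < c := by
    refine hK.eventually_forall_of_forall_eventually fun s hs => ?_
    have hat : ContinuousAt (fun p : ℝ × ℝ => g (p.1, max p.2 0)) (a, s) :=
      hg'.continuousAt (prod_mem_nhds (Ioi_mem_nhds ha) univ_mem)
    refine hat.eventually_lt continuousAt_const ?_
    simpa [max_eq_left (mem_Ici.1 (hK0 hs))] using h s hs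
  filter_upwards [key] with α hα s hs
  simpa [max_eq_left (mem_Ici.1 (hK0 hs))] using hα s hs

lemma eventually_forall_gt {g : ℝ × ℝ → ℝ} (hg : ContinuousOn g (Ioi 0 ×ˢ Ici 0)) {a c : ℝ}
    (ha : 0 < a) {K : Set ℝ} (hK : IsCompact K) (hK0 : K ⊆ Ici 0)
    (h : ∀ s ∈ K, c < g (a, s)) : ∀ᶠ α in nhds a, ∀ s ∈ K, c < g (α, s) := by
  filter_upwards [eventually_forall_lt (g := fun p => -g p) hg.neg (c := -c) ha hK hK0
    fun s hs => neg_lt_neg (h s hs)] with α hα s hs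
  exact neg_lt_neg_iff.1 (hα s hs)

/-- A strict inequality at a point of `[0,∞)` persists on a closed interval around it. -/
lemma exists_forall_Icc_lt {g : ℝ → ℝ} (hg : ContinuousOn g (Ici 0)) {x c : ℝ} (hx : 0 ≤ x)
    (h : g x < c) : ∃ η > 0, ∀ s ∈ Icc (x - η) (x + η), 0 ≤ s → g s < c := by
  have h1 := (hg x hx).eventually_lt continuousWithinAt_const h
  obtain ⟨η, hη, hball⟩ := Metric.mem_nhdsWithin_iff.1 h1
  refine ⟨η / 2, by positivity, fun s hs hs0 => hball ⟨?_, hs0⟩⟩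
  rw [Metric.mem_ball, Real.dist_eq, abs_lt]
  constructor <;> linarith [hs.1, hs.2]

section Fam

variable {n : ℕ} {f : ℝ → ℝ} {w : ℝ → ℝ → ℝ} {b a : ℝ}

/-- Persistence of the first critical point after a transversal zero. -/
lemma RadialFamily.eventually_nextCrit (hn : 2 ≤ n) (hpos : ∀ s, b < s → 0 < f s)
    (hw : RadialFamily n f w) (hwn : RadialFamily n f fun α r => -w α r) (ha : 0 < a)
    {z : ℝ → ℝ} (hzc : ContinuousAt z a) (hz0 : 0 < z a) (hdz : deriv (w a) (z a) < 0)
    {T : ℝ} (hT : NextCrit (w a) (z a) T) (hbT : w a T < -b) {ε : ℝ} (hε : 0 < ε) :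
    ∀ᶠ α in nhds a, ∃ t, |t - T| < ε ∧ NextCrit (w α) (z α) t := by
  have hT0 : 0 ≤ T := hz0.le.trans hT.lt.le
  obtain ⟨η, hη, hbη⟩ := exists_forall_Icc_lt (hw.sol a ha).cont hT0 hbT
  obtain ⟨θ, hθ, hdθ⟩ := exists_forall_Icc_lt (hw.sol a ha).deriv_cont hz0.le hdz
  set e := min (min η (ε / 2)) ((T - z a) / 2)
  have hzT := hT.lt
  have he0 : 0 < e := lt_min (lt_min hη (by positivity)) (by linarith)
  have heη : e ≤ η := (min_le_left _ _).trans (min_le_left _ _)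
  have heε : e ≤ ε / 2 := (min_le_left _ _).trans (min_le_right _ _)
  have heT : e ≤ (T - z a) / 2 := min_le_right _ _
  set d := min (min θ (z a)) ((T - z a) / 4)
  have hd0 : 0 < d := lt_min (lt_min hθ hz0) (by linarith)
  have hdθ' : d ≤ θ := (min_le_left _ _).trans (min_le_left _ _)
  have hdz' : d ≤ z a := (min_le_left _ _).trans (min_le_right _ _)
  have hdT : d ≤ (T - z a) / 4 := min_le_right _ _
  have hright : 0 < deriv (w a) (T + e) := by
    have := (hwn.sol a ha).deriv_neg_of_gt (b := b) (T := T) (R := T + e) (r := T + e) hn hpos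
      hT0 (by simp [hT.crit])
      (fun s hs => by
        have := hbη s ⟨by linarith [hs.1], by linarith [hs.2]⟩ (hT0.trans hs.1)
        linarith)
      ⟨by linarith, le_rfl⟩
    rw [deriv.fun_neg] at this
    linarith
  have hleft : ∀ s ∈ Icc (z a - d) (T - e), deriv (w a) s < 0 := by
    intro s hs
    rcases le_or_gt s (z a) with h | h
    · exact hdθ s ⟨by linarith [hs.1], by linarith⟩ (by linarith [hs.1])
    · exact hT.neg s ⟨h, by linarith [hs.2]⟩
  have hE1 := eventually_forall_lt hw.deriv_cont ha isCompact_Icc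
    (fun s hs => (by linarith [hs.1] : (0 : ℝ) ≤ s)) hleft
  have hE2 := eventually_forall_gt hw.deriv_cont (c := 0) ha (isCompact_singleton (x := T + e))
    (by rintro s rfl; exact (by linarith : (0 : ℝ) ≤ T + e)) (by rintro s rfl; exact hright)
  have hE3 := hzc.eventually (Ioo_mem_nhds (show z a - d < z a by linarith)
    (show z a < z a + d by linarith))
  filter_upwards [hE1, hE2, hE3, Ioi_mem_nhds ha] with α h1 h2 h3 hα
  have h1' : ∀ s ∈ Icc (z a - d) (T - e), deriv (w α) s < 0 := h1
  obtain ⟨t, htR, ht⟩ := exists_nextCrit (v := w α) (z := T - e) (R := T + e)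
    ((hw.sol α hα).deriv_cont.mono fun x hx => (by linarith [hx.1] : (0 : ℝ) ≤ x))
    (by linarith) (h1' _ ⟨by linarith, le_rfl⟩) (le_of_lt (h2 _ rfl))
  refine ⟨t, ?_, ?_, ?_, ht.crit⟩
  · rw [abs_lt]
    constructor <;> linarith [ht.lt]
  · linarith [ht.lt, h3.2]
  · intro s hs
    rcases le_or_gt s (T - e) with h | h
    · exact h1' s ⟨by linarith [hs.1, h3.1], h⟩
    · exact ht.neg s ⟨h, hs.2⟩

/-- Persistence of a transversal zero reached by descending from a critical point. -/
lemma RadialFamily.eventually_descendsTo (hn : 2 ≤ n) (hpos : ∀ s, b < s → 0 < f s)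
    (hw : RadialFamily n f w) (ha : 0 < a) {T : ℝ → ℝ} (hTc : ContinuousAt T a)
    (hT0 : ∀ α, 0 ≤ T α) (hcrit : ∀ᶠ α in nhds a, deriv (w α) (T α) = 0)
    (hbT : b < w a (T a)) {z : ℝ} (hz : DescendsTo (w a) (T a) z) {ε : ℝ} (hε : 0 < ε) :
    ∀ᶠ α in nhds a, ∃ t, |t - z| < ε ∧ DescendsTo (w α) (T α) t := by
  have hTa := hT0 a
  have hz0 : 0 ≤ z := hTa.trans hz.lt.le
  obtain ⟨η, hη, hbη⟩ := exists_forall_Icc_lt (hw.sol a ha).cont.neg hTa (neg_lt_neg hbT)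
  obtain ⟨θ, hθ, hdθ⟩ := exists_forall_Icc_lt (hw.sol a ha).deriv_cont hz0 hz.deriv_neg
  have hTz := hz.lt
  set e := min η ((z - T a) / 4)
  have he0 : 0 < e := lt_min hη (by linarith)
  have heη : e ≤ η := min_le_left _ _
  have heT : e ≤ (z - T a) / 4 := min_le_right _ _
  set d := min (min θ (ε / 2)) ((z - T a) / 4)
  have hd0 : 0 < d := lt_min (lt_min hθ (by positivity)) (by linarith)
  have hdθ' : d ≤ θ := (min_le_left _ _).trans (min_le_left _ _)
  have hdε : d ≤ ε / 2 := (min_le_left _ _).trans (min_le_right _ _)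
  have hdT : d ≤ (z - T a) / 4 := min_le_right _ _
  have hmid : ∀ s ∈ Icc (T a + e) (z + d), deriv (w a) s < 0 := by
    intro s hs
    rcases lt_or_ge s z with h | h
    · exact (hz.arc s ⟨by linarith [hs.1], h⟩).2
    · exact hdθ s ⟨by linarith, by linarith [hs.2]⟩ (hz0.trans h)
  have hend : w a (z + d) < 0 := by
    have hanti : StrictAntiOn (w a) (Icc z (z + d)) :=
      strictAntiOn_of_deriv_neg (convex_Icc _ _)
        ((hw.sol a ha).cont.mono fun x hx => hz0.trans hx.1) fun x hx => by
          rw [interior_Icc] at hx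
          exact hmid x ⟨by linarith [hx.1], hx.2.le⟩
    have := hanti (left_mem_Icc.2 (by linarith)) (right_mem_Icc.2 (by linarith))
      (show z < z + d by linarith)
    rwa [hz.zero] at this
  have hbefore : 0 < w a (z - d) := (hz.arc _ ⟨by linarith, by linarith⟩).1
  have hE1 := eventually_forall_lt hw.deriv_cont ha isCompact_Icc
    (fun s hs => (by linarith [hs.1] : (0 : ℝ) ≤ s)) hmid
  have hE2 := eventually_forall_lt hw.cont (c := 0) ha (isCompact_singleton (x := z + d))
    (by rintro s rfl; exact (by linarith : (0 : ℝ) ≤ z + d)) (by rintro s rfl; exact hend)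
  have hE3 := eventually_forall_gt hw.cont (c := 0) ha (isCompact_singleton (x := z - d))
    (by rintro s rfl; exact (by linarith : (0 : ℝ) ≤ z - d)) (by rintro s rfl; exact hbefore)
  have hE4 := eventually_forall_gt hw.cont (c := b) ha
    (isCompact_Icc (a := max (T a - e) 0) (b := T a + e))
    (fun s hs => (le_max_right _ _).trans hs.1) (fun s hs =>
      neg_lt_neg_iff.1 (hbη s ⟨by linarith [(le_max_left _ _).trans hs.1], by linarith [hs.2]⟩
        ((le_max_right _ _).trans hs.1)))
  have hE5 := hTc.eventually (Ioo_mem_nhds (show T a - e < T a by linarith)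
    (show T a < T a + e by linarith))
  filter_upwards [hE1, hE2, hE3, hE4, hE5, hcrit, Ioi_mem_nhds ha] with α h1 h2 h3 h4 h5 h6 hα
  have hsol := hw.sol α hα
  have h2 : w α (z + d) < 0 := h2 _ rfl
  have h3 : 0 < w α (z - d) := h3 _ rfl
  have hneg : ∀ s ∈ Ioc (T α) (z + d), deriv (w α) s < 0 := by
    intro s hs
    rcases le_or_gt s (T a + e) with h | h
    · exact hsol.deriv_neg_of_gt hn hpos (hT0 α) h6
        (fun x hx => h4 x ⟨max_le (h5.1.le.trans hx.1) ((hT0 α).trans hx.1), hx.2⟩) ⟨hs.1, h⟩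
    · exact h1 s ⟨h.le, hs.2⟩
  have hanti : StrictAntiOn (w α) (Icc (T α) (z + d)) :=
    strictAntiOn_of_deriv_neg (convex_Icc _ _)
      (hsol.cont.mono fun x hx => (hT0 α).trans hx.1) fun x hx => by
        rw [interior_Icc] at hx
        exact hneg x ⟨hx.1, hx.2.le⟩
  obtain ⟨t, ht, htz⟩ := intermediate_value_Ioo' (show z - d ≤ z + d by linarith)
    (hsol.cont.mono fun x hx => (by linarith [hx.1] : (0 : ℝ) ≤ x)) ⟨h2, h3⟩
  have hTt : T α < t := by linarith [h5.2, ht.1]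
  refine ⟨t, ?_, hTt, fun s hs => ⟨?_, ?_⟩, htz, hneg t ⟨hTt, ht.2.le⟩⟩
  · rw [abs_lt]
    constructor <;> linarith [ht.1, ht.2]
  · rw [← htz]
    exact hanti ⟨hs.1.le, by linarith [hs.2, ht.2]⟩ ⟨hTt.le, ht.2.le⟩ hs.2
  · exact hneg s ⟨hs.1, by linarith [hs.2, ht.2]⟩

end Fam

/-! ### The functions `Z_k`, `T_k` and the sets `N_k` -/

/-- The family with alternating signs: `(-1)^k u`. -/
def altSign (u : ℝ → ℝ → ℝ) (k : ℕ) (α r : ℝ) : ℝ := (-1 : ℝ) ^ k * u α r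

section Main

variable {n : ℕ} {f : ℝ → ℝ} {u : ℝ → ℝ → ℝ} {b α : ℝ} {k : ℕ}

lemma deriv_altSign (u : ℝ → ℝ → ℝ) (k : ℕ) (α r : ℝ) :
    deriv (altSign u k α) r = (-1 : ℝ) ^ k * deriv (u α) r :=
  deriv_const_mul_field _

lemma altSign_succ (u : ℝ → ℝ → ℝ) (k : ℕ) :
    altSign u (k + 1) = fun α r => -altSign u k α r := by
  funext α r
  simp only [altSign, pow_succ]
  ring

lemma altSign_eq_zero {r : ℝ} : altSign u k α r = 0 ↔ u α r = 0 := by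
  simp [altSign]

lemma Family.radialFamily_altSign (hodd : ∀ s, f (-s) = -f s) (hu : Family n f u) (k : ℕ) :
    RadialFamily n f (altSign u k) := by
  obtain ⟨hs, hc, hd⟩ := hu
  have hsgn : ∀ s, f ((-1 : ℝ) ^ k * s) = (-1 : ℝ) ^ k * f s := by
    intro s
    rcases neg_one_pow_eq_or ℝ k with h | h <;> simp [h, hodd]
  refine ⟨fun α hα => ?_, hc.const_mul _, ?_⟩
  · obtain ⟨-, -, hcont, hdiff, hode⟩ := hs α hα
    have hdc : ContinuousOn (deriv (u α)) (Ici 0) :=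
      hd.comp (f := fun r => (α, r)) (by fun_prop) fun r hr => ⟨hα, hr⟩
    have hfun : deriv (altSign u k α) = fun r => (-1 : ℝ) ^ k * deriv (u α) r :=
      funext (deriv_altSign u k α)
    refine ⟨hcont.const_mul _, ?_, fun r hr => ?_, fun r hr => ?_⟩
    · rw [hfun]
      exact hdc.const_mul _
    · rw [deriv_altSign]
      exact (hdiff r hr).1.hasDerivAt.const_mul _
    · rw [hfun]
      refine ((hdiff r hr).2.hasDerivAt.const_mul ((-1 : ℝ) ^ k)).congr_deriv ?_
      have := hode r hr
      rw [altSign, hsgn, show deriv (deriv (u α)) r =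
        -(((n : ℝ) - 1) / r * deriv (u α) r + f (u α r)) by linarith]
      ring
  · simp only [deriv_altSign]
    exact hd.const_mul _

lemma ZsetK_succ (u : ℝ → ℝ → ℝ) (k : ℕ) (α : ℝ) :
    ZsetK u (k + 1) α = descentSet (altSign u k α) (Tk u k α) := by
  ext r
  simp only [ZsetK, ZsetAux, descentSet, deriv_altSign, altSign, pow_succ, mem_ofPred_eq,
    Nat.add_sub_cancel, mul_neg, mul_one, neg_mul, Left.neg_neg_iff, Left.neg_pos_iff]

lemma Zk_succ (u : ℝ → ℝ → ℝ) (k : ℕ) (α : ℝ) :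
    Zk u (k + 1) α = sSup (descentSet (altSign u k α) (Tk u k α)) := by
  rw [← ZsetK_succ]
  rfl

lemma Tk_zero (u : ℝ → ℝ → ℝ) (α : ℝ) : Tk u 0 α = 0 := rfl

lemma Tk_succ (u : ℝ → ℝ → ℝ) (k : ℕ) (α : ℝ) :
    Tk u (k + 1) α = sInf {r | Zk u (k + 1) α < r ∧ deriv (altSign u k α) r = 0} := by
  simp only [deriv_altSign, mul_eq_zero, pow_eq_zero_iff', neg_eq_zero, one_ne_zero, false_and,
    false_or]
  rfl

lemma Tk_nonneg (u : ℝ → ℝ → ℝ) (k : ℕ) (α : ℝ) : 0 ≤ Tk u k α := by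
  induction k with
  | zero => exact le_rfl
  | succ k ih =>
    have hZ : 0 ≤ Zk u (k + 1) α := by
      rw [Zk_succ]
      exact Real.sSup_nonneg fun r hr => ih.trans hr.1.le
    rw [Tk_succ]
    exact Real.sInf_nonneg fun r hr => hZ.trans hr.1.le

lemma mem_Nk_succ : α ∈ Nk u (k + 1) ↔ α ∈ Nk u k ∧ (k ≠ 0 → ¬Ftil u (k + 1) α) ∧
    uAtZ u (k + 1) α = 0 ∧ (-1 : ℝ) ^ k * duAtZ u (k + 1) α < 0 := by
  cases k with
  | zero => simp [Nk]
  | succ k =>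
    simp only [Nk, pow_succ, mem_ofPred_eq, ne_eq, Nat.succ_ne_zero, not_false_eq_true,
      forall_const, mul_neg, mul_one, neg_mul, Left.neg_neg_iff, neg_neg]

lemma pos_of_mem_Nk (h : α ∈ Nk u k) : 0 < α := by
  induction k with
  | zero => exact h
  | succ k ih => exact ih (mem_Nk_succ.1 h).1

lemma not_Ftil_iff : ¬Ftil u (k + 2) α ↔
    ∃ r, Zk u (k + 1) α < r ∧ 0 ≤ deriv (altSign u k α) r := by
  simp [Ftil, deriv_altSign, pow_succ]

/-- Either the descending arc ends at a finite zero, or the solution descends to zero at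
infinity. -/
lemma arc_of_uAtZ_eq_zero (hodd : ∀ s, f (-s) = -f s) (hu : Family n f u) (hα : 0 < α)
    (h : uAtZ u (k + 1) α = 0) :
    (BddAbove (ZsetK u (k + 1) α) ∧ Tk u k α < Zk u (k + 1) α ∧
        (∀ s ∈ Ioo (Tk u k α) (Zk u (k + 1) α),
          0 < altSign u k α s ∧ deriv (altSign u k α) s < 0) ∧
        altSign u k α (Zk u (k + 1) α) = 0) ∨
      (¬BddAbove (ZsetK u (k + 1) α) ∧
        (∀ s, Tk u k α < s → 0 < altSign u k α s ∧ deriv (altSign u k α) s < 0) ∧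
        Tendsto (altSign u k α) atTop (nhds 0)) := by
  unfold uAtZ at h
  by_cases hb : BddAbove (ZsetK u (k + 1) α)
  · rw [if_pos hb] at h
    have hne : (ZsetK u (k + 1) α).Nonempty := by
      by_contra! hempty
      rw [Zk_succ, ← ZsetK_succ, hempty, Real.sSup_empty, (hu.1 α hα).1] at h
      exact hα.ne' h
    refine Or.inl ⟨hb, ?_⟩
    rw [ZsetK_succ] at hb hne
    have harc := arc_of_bddAbove hne hb
    rw [← Zk_succ] at harc
    exact ⟨harc.1, harc.2, altSign_eq_zero.2 h⟩
  · rw [if_neg hb] at h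
    have harc : ∀ s, Tk u k α < s → 0 < altSign u k α s ∧ deriv (altSign u k α) s < 0 := by
      rw [ZsetK_succ] at hb
      exact arc_of_not_bddAbove hb
    refine Or.inr ⟨hb, harc, ?_⟩
    obtain ⟨l, hl⟩ := ((hu.radialFamily_altSign hodd k).sol α hα).exists_tendsto_of_descent
      (Tk_nonneg u k α) harc
    have hsq : ((-1 : ℝ) ^ k) * (-1) ^ k = 1 := by rw [← mul_pow]; simp
    have hlu : Tendsto (u α) atTop (nhds ((-1 : ℝ) ^ k * l)) := by
      refine (hl.const_mul ((-1 : ℝ) ^ k)).congr fun r => ?_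
      rw [altSign, ← mul_assoc, hsq, one_mul]
    rw [hlu.limUnder_eq] at h
    have hl0 : l = 0 := by simpa using h
    rwa [hl0] at hl

lemma descendsTo_of_mem_Nk (hn : 2 ≤ n) (hf : Continuous f) (hodd : ∀ s, f (-s) = -f s)
    (hu : Family n f u) (h : α ∈ Nk u (k + 1)) :
    DescendsTo (altSign u k α) (Tk u k α) (Zk u (k + 1) α) := by
  have hα := pos_of_mem_Nk h
  obtain ⟨-, -, hz, hdz⟩ := mem_Nk_succ.1 h
  unfold duAtZ at hdz
  rcases arc_of_uAtZ_eq_zero hodd hu hα hz with ⟨hb, hlt, harc, h0⟩ | ⟨hb, harc, hlim⟩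
  · rw [if_pos hb] at hdz
    exact ⟨hlt, harc, h0, by rwa [deriv_altSign]⟩
  · rw [if_neg hb] at hdz
    have hd := ((hu.radialFamily_altSign hodd k).sol α hα).deriv_tendsto_zero hn hf
      harc hlim
    have hsq : ((-1 : ℝ) ^ k) * (-1) ^ k = 1 := by rw [← mul_pow]; simp
    have hdu : Tendsto (deriv (u α)) atTop (nhds ((-1 : ℝ) ^ k * 0)) := by
      refine (hd.const_mul ((-1 : ℝ) ^ k)).congr fun r => ?_
      rw [deriv_altSign, ← mul_assoc, hsq, one_mul]
    rw [hdu.limUnder_eq] at hdz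
    simp at hdz

lemma mem_Nk_succ_of_descendsTo {z : ℝ} (hN : α ∈ Nk u k) (hF : k ≠ 0 → ¬Ftil u (k + 1) α)
    (h : DescendsTo (altSign u k α) (Tk u k α) z) :
    α ∈ Nk u (k + 1) ∧ Zk u (k + 1) α = z := by
  have hZ : Zk u (k + 1) α = z := by rw [Zk_succ, h.sSup_eq]
  have hb : BddAbove (ZsetK u (k + 1) α) := by
    rw [ZsetK_succ]
    exact h.bddAbove
  refine ⟨mem_Nk_succ.2 ⟨hN, hF, ?_, ?_⟩, hZ⟩
  · rw [uAtZ, if_pos hb, hZ]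
    exact altSign_eq_zero.1 h.zero
  · rw [duAtZ, if_pos hb, hZ, ← deriv_altSign]
    exact h.deriv_neg

lemma nextCrit_of_not_Ftil (hn : 2 ≤ n) (hf : Continuous f) (hodd : ∀ s, f (-s) = -f s)
    (hu : Family n f u) (h : α ∈ Nk u (k + 1)) (hF : ¬Ftil u (k + 2) α) :
    NextCrit (altSign u k α) (Zk u (k + 1) α) (Tk u (k + 1) α) := by
  have hZ := descendsTo_of_mem_Nk hn hf hodd hu h
  obtain ⟨R, hR, hdR⟩ := not_Ftil_iff.1 hF
  have hsol := (hu.radialFamily_altSign hodd k).sol α (pos_of_mem_Nk h)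
  obtain ⟨T, -, hT⟩ := exists_nextCrit (hsol.deriv_cont.mono fun x hx =>
    (Tk_nonneg u k α).trans (hZ.lt.le.trans hx.1)) hR.le hZ.deriv_neg hdR
  rwa [Tk_succ, hT.sInf_eq]

lemma not_Ftil_of_nextCrit {T : ℝ} (hT : NextCrit (altSign u k α) (Zk u (k + 1) α) T) :
    ¬Ftil u (k + 2) α ∧ Tk u (k + 1) α = T :=
  ⟨not_Ftil_iff.2 ⟨T, hT.lt, hT.crit.ge⟩, by rw [Tk_succ, hT.sInf_eq]⟩

/-- At the extremal point preceding a zero (or the vanishing at infinity) the modulus of the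
solution exceeds `b`. -/
lemma gt_altSign_Tk (hn : 2 ≤ n) (hf : Continuous f) (hodd : ∀ s, f (-s) = -f s)
    (hneg : ∀ s ∈ Icc (0 : ℝ) b, f s ≤ 0) (hu : Family n f u) (hα : 0 < α)
    (hcrit : deriv (altSign u k α) (Tk u k α) = 0) (h : uAtZ u (k + 1) α = 0) :
    b < altSign u k α (Tk u k α) := by
  have hsol := (hu.radialFamily_altSign hodd k).sol α hα
  rcases arc_of_uAtZ_eq_zero hodd hu hα h with ⟨-, hlt, harc, h0⟩ | ⟨-, harc, hlim⟩
  · exact hsol.gt_of_descent_to_zero hn hf hneg (Tk_nonneg u k α) hlt hcrit harc h0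
  · exact hsol.gt_of_descent_to_infty hn hf hneg (Tk_nonneg u k α) hcrit harc hlim

lemma continuousAt_of_eventually_abs {g : ℝ → ℝ} {a : ℝ}
    (h : ∀ ε > 0, ∀ᶠ x in nhds a, |g x - g a| < ε) : ContinuousAt g a :=
  Metric.tendsto_nhds.2 fun ε hε => by simpa [Real.dist_eq] using h ε hε

/-- Near `α`, the set `N_{k+1} \ F̃_{k+2}` is open and `T_{k+1}` is continuous, provided `N_{k+1}`
is a neighborhood of `α`, `Z_{k+1}` is continuous at `α`, and the next arc reaches zero. -/
lemma eventually_not_Ftil (hn : 2 ≤ n) (hf : Continuous f) (hodd : ∀ s, f (-s) = -f s)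
    (hpos : ∀ s, b < s → 0 < f s) (hneg : ∀ s ∈ Icc (0 : ℝ) b, f s ≤ 0)
    (hu : Family n f u) (hZc : ContinuousAt (Zk u (k + 1)) α) (hN : α ∈ Nk u (k + 1))
    (hF : ¬Ftil u (k + 2) α) (h0 : uAtZ u (k + 2) α = 0) :
    (∀ᶠ α' in nhds α, ¬Ftil u (k + 2) α' ∧ deriv (altSign u (k + 1) α') (Tk u (k + 1) α') = 0) ∧
      ContinuousAt (Tk u (k + 1)) α ∧ b < altSign u (k + 1) α (Tk u (k + 1) α) := by
  have hα := pos_of_mem_Nk hN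
  have hT := nextCrit_of_not_Ftil hn hf hodd hu hN hF
  have hZ := descendsTo_of_mem_Nk hn hf hodd hu hN
  have hcrit : ∀ {α' : ℝ}, deriv (altSign u k α') (Tk u (k + 1) α') = 0 →
      deriv (altSign u (k + 1) α') (Tk u (k + 1) α') = 0 := by
    intro α' h
    rw [deriv_altSign] at h ⊢
    rw [pow_succ]
    linarith
  have hgt : b < altSign u (k + 1) α (Tk u (k + 1) α) :=
    gt_altSign_Tk hn hf hodd hneg hu hα (hcrit hT.crit) h0
  have hev : ∀ ε > 0, ∀ᶠ α' in nhds α, ∃ t, |t - Tk u (k + 1) α| < ε ∧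
      NextCrit (altSign u k α') (Zk u (k + 1) α') t := fun ε hε => by
    refine (hu.radialFamily_altSign hodd k).eventually_nextCrit (b := b) hn hpos ?_ hα hZc
      ((Tk_nonneg u k α).trans_lt hZ.lt) hZ.deriv_neg hT ?_ hε
    · rw [← altSign_succ]
      exact hu.radialFamily_altSign hodd (k + 1)
    · rw [altSign_succ] at hgt
      linarith
  refine ⟨?_, continuousAt_of_eventually_abs fun ε hε => ?_, hgt⟩
  · filter_upwards [hev 1 one_pos] with α' ⟨t, _, ht⟩
    obtain ⟨h1, h2⟩ := not_Ftil_of_nextCrit ht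
    refine ⟨h1, hcrit ?_⟩
    rw [h2]
    exact ht.crit
  · filter_upwards [hev ε hε] with α' ⟨t, hlt, ht⟩
    rwa [(not_Ftil_of_nextCrit ht).2]

/-- Near `α ∈ N_{k+1}`, the set `N_{k+1}` is open and `Z_{k+1}` is continuous, provided the
defining conditions preceding `Z_{k+1}` are stable. -/
lemma Nk_succ_mem_nhds_of_stable (hn : 2 ≤ n) (hf : Continuous f) (hodd : ∀ s, f (-s) = -f s)
    (hpos : ∀ s, b < s → 0 < f s) (hu : Family n f u) (h : α ∈ Nk u (k + 1))
    (hNk : Nk u k ∈ nhds α) (hFk : ∀ᶠ α' in nhds α, k ≠ 0 → ¬Ftil u (k + 1) α')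
    (hTc : ContinuousAt (Tk u k) α)
    (hcrit : ∀ᶠ α' in nhds α, deriv (altSign u k α') (Tk u k α') = 0)
    (hgt : b < altSign u k α (Tk u k α)) :
    Nk u (k + 1) ∈ nhds α ∧ ContinuousAt (Zk u (k + 1)) α := by
  have hev : ∀ ε > 0, ∀ᶠ α' in nhds α, α' ∈ Nk u (k + 1) ∧
      |Zk u (k + 1) α' - Zk u (k + 1) α| < ε := fun ε hε => by
    filter_upwards [hNk, hFk, (hu.radialFamily_altSign hodd k).eventually_descendsTo hn hpos
      (pos_of_mem_Nk h) hTc (Tk_nonneg u k) hcrit hgt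
      (descendsTo_of_mem_Nk hn hf hodd hu h) hε] with α' h1 h2 ⟨t, hlt, ht⟩
    obtain ⟨h3, h4⟩ := mem_Nk_succ_of_descendsTo h1 h2 ht
    rw [h4]
    exact ⟨h3, hlt⟩
  exact ⟨(hev 1 one_pos).mono fun _ h => h.1,
    continuousAt_of_eventually_abs fun ε hε => (hev ε hε).mono fun _ h => h.2⟩

/-- `N_{k+1}` is open and `Z_{k+1}` is continuous on it. -/
lemma Nk_succ_mem_nhds (hn : 2 ≤ n) (hf : Continuous f) (hodd : ∀ s, f (-s) = -f s)
    (hpos : ∀ s, b < s → 0 < f s) (hneg : ∀ s ∈ Icc (0 : ℝ) b, f s ≤ 0)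
    (hu : Family n f u) (h : α ∈ Nk u (k + 1)) :
    Nk u (k + 1) ∈ nhds α ∧ ContinuousAt (Zk u (k + 1)) α := by
  induction k with
  | zero =>
    have hα := pos_of_mem_Nk h
    have hcrit : ∀ α' : ℝ, 0 < α' → deriv (altSign u 0 α') (Tk u 0 α') = 0 := fun α' hα' => by
      rw [deriv_altSign, Tk_zero, (hu.1 α' hα').2.1, mul_zero]
    refine Nk_succ_mem_nhds_of_stable hn hf hodd hpos hu h (Ioi_mem_nhds hα) (by simp)
      (continuousAt_const (y := (0 : ℝ))) ?_
      (gt_altSign_Tk hn hf hodd hneg hu hα (hcrit α hα) (mem_Nk_succ.1 h).2.2.1)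
    filter_upwards [Ioi_mem_nhds hα] with α' hα' using hcrit α' hα'
  | succ k ih =>
    obtain ⟨hN, hF, h0, -⟩ := mem_Nk_succ.1 h
    obtain ⟨hNk, hZc⟩ := ih hN
    obtain ⟨hev, hTc, hgt⟩ :=
      eventually_not_Ftil hn hf hodd hpos hneg hu hZc hN (hF k.succ_ne_zero) h0
    exact Nk_succ_mem_nhds_of_stable hn hf hodd hpos hu h hNk (hev.mono fun _ h _ => h.1) hTc
      (hev.mono fun _ h => h.2) hgt

end Main

end Paper


/-- **Proposition 2.2.** If `α* ∈ G_k`, `k ≥ 2`, then a whole neighborhood of `α*` is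
contained in `N_{k-1} \ F̃_k`. -/
theorem nbhd_in_Nkm1_diff_Ftilk
    (n : ℕ) (hn : 2 ≤ n)
    (f : ℝ → ℝ) (b β : ℝ) (hf : Continuous f)
    (h1 : Hf1 f b β) (h2 : Hf2 f)
    (u : ℝ → ℝ → ℝ) (hu : Family n f u)
    (k : ℕ) (hk : 2 ≤ k) (αs : ℝ) (hαs : αs ∈ Gk u k) :
    ∃ δ₀ : ℝ, 0 < δ₀ ∧ Ioo (αs - δ₀) (αs + δ₀) ⊆ Nk u (k - 1) \ FtilSet u k := by
  obtain ⟨m, rfl⟩ := Nat.exists_eq_add_of_le' hk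
  obtain ⟨hodd, -, -, -, hpos, hneg, -, -⟩ := h1
  obtain ⟨hN, hF, h0, -⟩ := hαs
  obtain ⟨hNk, hZc⟩ := Nk_succ_mem_nhds hn hf hodd hpos hneg hu hN
  obtain ⟨hev, -, -⟩ := eventually_not_Ftil hn hf hodd hpos hneg hu hZc hN hF h0
  obtain ⟨δ, hδ, hball⟩ := Metric.eventually_nhds_iff_ball.1 (hev.and hNk)
  refine ⟨δ, hδ, fun α hα => ?_⟩
  rw [← Real.ball_eq_Ioo] at hα
  obtain ⟨⟨h, -⟩, hmem⟩ := hball α hα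
  exact ⟨hmem, fun hFt => h hFt.2⟩
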